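/- Suppose T is a subtree of ([ω]^ω, ⊆*) all of whose levels are countable, and b = {A_α : α < γ} is a maximal branch in T with cf(γ) > ω such that only countably many nodes of b are branching nodes of T. Then T is not a maximal subtree of ([ω]^ω, ⊆*). -/

import Mathlib

/-- `A ⊆* B`: almost inclusion, `A \ B` is finite. -/
def AlmostSubset (A B : Set ℕ) : Prop := (A \ B).Finite

/-- `A` and `B` are `⊆*`-incomparable. -/
def StarIncomp (A B : Set ℕ) : Prop := ¬ AlmostSubset A B ∧ ¬ AlmostSubset B A

/-- The predecessors of `t` in `T` with respect to `⊆*` (including `t` itself). -/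
def StarPred (T : Set (Set ℕ)) (t : Set ℕ) : Set (Set ℕ) := {s ∈ T | AlmostSubset t s}

/-- `T` is a subtree of `([ω]^ω, ⊆*)`: all members are infinite, the largest element
`ω` belongs to `T`, distinct members of `T` are not almost equal (so `⊆*` is a genuine
partial order on `T`), and the predecessors of each node are well-ordered by reverse
`⊆*` (every nonempty subset of a predecessor set has a `⊆*`-greatest element). -/
def IsStarTree (T : Set (Set ℕ)) : Prop :=
  (∀ A ∈ T, A.Infinite) ∧ Set.univ ∈ T ∧
    (∀ s ∈ T, ∀ t ∈ T, AlmostSubset s t → AlmostSubset t s → s = t) ∧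
    ∀ t ∈ T, ∀ S ⊆ StarPred T t, S.Nonempty → ∃ m ∈ S, ∀ s ∈ S, AlmostSubset s m

/-- `T` end-extends `S` (as subtrees of `([ω]^ω, ⊆*)`). -/
def StarEndExt (S T : Set (Set ℕ)) : Prop :=
  S ⊆ T ∧ ∀ s ∈ S, StarPred T s = StarPred S s

/-- `T` is a maximal subtree of `([ω]^ω, ⊆*)`: for every infinite `C ⊆ ω` either some
`B ∈ T` satisfies `B ⊆* C`, or there are `⊆*`-incomparable `B, B' ∈ T` with
`C ⊆* B` and `C ⊆* B'`. -/
def IsMaxStarTree (T : Set (Set ℕ)) : Prop :=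
  IsStarTree T ∧ ∀ C : Set ℕ, C.Infinite →
    (∃ B ∈ T, AlmostSubset B C) ∨
      ∃ B ∈ T, ∃ B' ∈ T, StarIncomp B B' ∧ AlmostSubset C B ∧ AlmostSubset C B'

/-- `s` and `t` lie on the same level of `T`: their predecessor sets (which are
well-orders under `⊆*`) are order isomorphic, i.e. have the same order type. -/
def SameLevel (T : Set (Set ℕ)) (s t : Set ℕ) : Prop :=
  Nonempty ((fun a b : StarPred T s => AlmostSubset a.1 b.1) ≃r
    (fun a b : StarPred T t => AlmostSubset a.1 b.1))

/-- `T` has countable levels. -/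
def CountableLevels (T : Set (Set ℕ)) : Prop :=
  ∀ t ∈ T, {s ∈ T | SameLevel T s t}.Countable

/-- `A` is a branching node of `T`: there are `⊆*`-incomparable `B, C ∈ T` with
`pred_T(B) = pred_T(C)` such that `A` is the `⊆*`-smallest node of `pred_T(B)`. -/
def IsBranchingNode (T : Set (Set ℕ)) (A : Set ℕ) : Prop :=
  A ∈ T ∧ ∃ B ∈ T, ∃ C ∈ T, StarIncomp B C ∧ StarPred T B = StarPred T C ∧
    A ∈ StarPred T B ∧ ∀ s ∈ StarPred T B, AlmostSubset A s

/-!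
Suppose `T` is maximal with countable levels. Call a node slim if countably many of the nodes
incomparable with it suffice to have one of them below every node incomparable with it. Along an
`ω`-chain of slim nodes one can diagonalise to get two disjoint pseudointersections, each almost
contained in none of the countably many nodes to be avoided; by maximality each almost contains a
node of `T`, so the chain has two incomparable upper bounds. Constant chains then show that every
slim node has two incomparable slim extensions. Choose a countable family of slim nodes with this
splitting property for which the least ordinal `o` above all its levels is as small as possible.
By minimality the family has members of level cofinal in `o` above each of its members, so it
contains a Cantor scheme all of whose `2^ω` branches have levels cofinal in `o`. Each branch is
bounded, so it has an upper bound on level `o`, and different branches have different upper bounds: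
level `o` is uncountable.
-/

open Set

section Scheme

variable {α : Type*}

theorem exists_binary_scheme {Q : Set α} (hQ : Q.Nonempty) {r : ℕ → α → α → α → Prop}
    (hr : ∀ n, ∀ a ∈ Q, ∃ s ∈ Q, ∃ t ∈ Q, r n a s t) :
    ∃ G : List Bool → α, (∀ l, G l ∈ Q) ∧
      ∀ l, r l.length (G l) (G (true :: l)) (G (false :: l)) := by
  obtain ⟨a₀, ha₀⟩ := hQ
  choose! s hs t ht hst using hr
  let G : List Bool → α := fun l =>
    List.rec a₀ (fun i l a => if i then s l.length a else t l.length a) l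
  have hG : ∀ l, G l ∈ Q := by
    intro l
    induction l with
    | nil => exact ha₀
    | cons i l ih =>
      cases i
      · exact ht l.length _ ih
      · exact hs l.length _ ih
  exact ⟨G, hG, fun l => hst l.length _ (hG l)⟩

theorem not_countable_of_cantorScheme {S : Set α} {A : List Bool → Set α}
    (hA : CantorScheme.Disjoint A) (hAS : A [] ⊆ S)
    (hne : ∀ x : ℕ → Bool, (⋂ n, A (PiNat.res x n)).Nonempty) : ¬ S.Countable := by
  intro hS
  let node (x : ℕ → Bool) : α := (CantorScheme.inducedMap A).2 ⟨x, hne x⟩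
  have node_injective : node.Injective := fun x y hxy =>
    congrArg Subtype.val (hA.map_injective hxy)
  have hnode : MapsTo node univ S := fun x _ => hAS (CantorScheme.map_mem ⟨x, hne x⟩ 0)
  have : Countable (ℕ → Bool) := countable_univ_iff.1 (hnode.countable_of_injOn
    node_injective.injOn hS)
  obtain ⟨f, hf⟩ := exists_surjective_nat (ℕ → Bool)
  obtain ⟨n, hn⟩ := hf fun n => !f n n
  simpa using congrFun hn n

end Scheme

section TreeOrder

universe u

variable {P : Type u} [PartialOrder P]

/-- A partial order in which the elements below any element form a chain. Together with
`WellFoundedLT` this is the set-theoretic notion of a tree, with the root at the bottom. -/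
class IsTreeOrder (P : Type*) [PartialOrder P] : Prop where
  isChain_Iic (c : P) : IsChain (· ≤ ·) (Iic c)

theorem le_or_ge_of_le_of_le [IsTreeOrder P] {a b c : P} (ha : a ≤ c) (hb : b ≤ c) :
    a ≤ b ∨ b ≤ a :=
  (IsTreeOrder.isChain_Iic c).total ha hb

theorem incompRel_of_le_left [IsTreeOrder P] {a b d : P} (h : IncompRel (· ≤ ·) a b)
    (had : a ≤ d) : IncompRel (· ≤ ·) d b :=
  ⟨fun hdb => h.not_le (had.trans hdb),
    fun hbd => (le_or_ge_of_le_of_le had hbd).elim h.not_le h.not_ge⟩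

theorem lt_of_le_of_le_of_incompRel {a s t : P} (has : a ≤ s) (hat : a ≤ t)
    (hst : IncompRel (· ≤ ·) s t) : a < s :=
  has.lt_of_not_ge fun hsa => hst.not_le (hsa.trans hat)

section Level

variable [WellFoundedLT P]

/-- The level of a node: its well-founded rank, which in a tree is the order type of its strict
predecessors. -/
noncomputable def level (a : P) : Ordinal.{u} :=
  IsWellFounded.rank (· < ·) a

theorem level_strictMono : StrictMono (level : P → Ordinal.{u}) :=
  WellFoundedLT.rank_strictMono

theorem exists_le_level_eq {t : P} {o : Ordinal.{u}} (ho : o ≤ level t) :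
    ∃ a ≤ t, level a = o := by
  induction t using WellFoundedLT.induction with
  | ind t ih =>
    rcases ho.eq_or_lt with rfl | ho
    · exact ⟨t, le_rfl, rfl⟩
    · rw [level, IsWellFounded.rank_eq, Ordinal.lt_iSup_iff] at ho
      obtain ⟨⟨b, hbt⟩, hob⟩ := ho
      obtain ⟨a, hab, ha⟩ := ih b hbt (Order.lt_succ_iff.1 hob)
      exact ⟨a, hab.trans hbt.le, ha⟩

theorem incompRel_of_level_eq {a b : P} (h : level a = level b) (hne : a ≠ b) :
    IncompRel (· ≤ ·) a b :=
  ⟨fun hab => (level_strictMono (hab.lt_of_ne hne)).ne h,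
    fun hba => (level_strictMono (hba.lt_of_ne hne.symm)).ne h.symm⟩

variable [IsTreeOrder P]

theorem level_le_level_iff {a b c : P} (ha : a ≤ c) (hb : b ≤ c) :
    level a ≤ level b ↔ a ≤ b := by
  refine ⟨fun h => ?_, fun h => level_strictMono.monotone h⟩
  by_contra hab
  have hba : b < a := ((le_or_ge_of_le_of_le ha hb).resolve_left hab).lt_of_not_ge hab
  exact (level_strictMono hba).not_ge h

/-- In a tree, `level` identifies the branch up to `c` with an initial segment of the ordinals, so
that nodes on the same level have isomorphic sets of predecessors. -/
noncomputable def iicIsoLevel (c : P) : Iic c ≃o Iic (level c) :=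
  RelIso.ofSurjective
    (OrderEmbedding.ofMapLEIff
      (fun a : Iic c => (⟨level a.1, level_strictMono.monotone a.2⟩ : Iic (level c)))
      fun a b => level_le_level_iff a.2 b.2)
    fun ⟨_, ho⟩ =>
      let ⟨a, hac, ha⟩ := exists_le_level_eq ho
      ⟨⟨a, hac⟩, Subtype.ext ha⟩

theorem not_countable_level_of_scheme {o : Ordinal.{u}} {G : List Bool → P}
    (hGo : ∀ l, level (G l) ≤ o)
    (hG : ∀ l, IncompRel (· ≤ ·) (G (true :: l)) (G (false :: l)))
    (hbdd : ∀ x : ℕ → Bool, ∃ b, o ≤ level b ∧ ∀ n, G (PiNat.res x n) ≤ b) :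
    ¬ {t : P | level t = o}.Countable := by
  refine not_countable_of_cantorScheme (A := fun l => {t | level t = o ∧ G l ≤ t})
    ?_ (fun t ht => ht.1) fun x => ?_
  · have no_common_bound (l : List Bool) (t : P) (ht : G (true :: l) ≤ t) :
        ¬ G (false :: l) ≤ t :=
      (incompRel_of_le_left (hG l) ht).not_ge
    rintro l (_ | _) (_ | _) hij
    · exact absurd rfl hij
    · exact disjoint_left.2 fun t hf ht => no_common_bound l t ht.2 hf.2
    · exact disjoint_left.2 fun t ht hf => no_common_bound l t ht.2 hf.2
    · exact absurd rfl hij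
  · obtain ⟨b, hob, hb⟩ := hbdd x
    obtain ⟨t, htb, ht⟩ := exists_le_level_eq hob
    exact ⟨t, mem_iInter.2 fun n => ⟨ht, (level_le_level_iff (hb n) htb).1 (ht ▸ hGo _)⟩⟩

end Level

/-- Every node of `Q` has two incomparable extensions in `Q`; in a tree this makes `Q` a
(not necessarily downward closed) perfect subset. -/
def IsSplitting (Q : Set P) : Prop :=
  Q.Nonempty ∧ ∀ a ∈ Q, ∃ s ∈ Q, ∃ t ∈ Q, a ≤ s ∧ a ≤ t ∧ IncompRel (· ≤ ·) s t

namespace IsSplitting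

variable {Q : Set P}

theorem inter_Ici (hQ : IsSplitting Q) {a : P} (ha : a ∈ Q) : IsSplitting (Q ∩ Ici a) := by
  refine ⟨⟨a, ha, le_rfl⟩, fun b hb => ?_⟩
  obtain ⟨s, hs, t, ht, hbs, hbt, hst⟩ := hQ.2 b hb.1
  exact ⟨s, ⟨hs, hb.2.trans hbs⟩, t, ⟨ht, hb.2.trans hbt⟩, hbs, hbt, hst⟩

theorem exists_countable (hQ : IsSplitting Q) : ∃ R ⊆ Q, R.Countable ∧ IsSplitting R := by
  obtain ⟨G, hGQ, hG⟩ := exists_binary_scheme hQ.1 fun _ : ℕ => hQ.2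
  refine ⟨range G, range_subset_iff.2 hGQ, countable_range G, range_nonempty G, ?_⟩
  rintro _ ⟨l, rfl⟩
  exact ⟨_, mem_range_self _, _, mem_range_self _, hG l⟩

variable [WellFoundedLT P]

theorem exists_countable_level_cofinal (hQ : IsSplitting Q) :
    ∃ R ⊆ Q, R.Countable ∧ IsSplitting R ∧ ∃ o : Ordinal.{u}, (∀ a ∈ R, level a < o) ∧
      ∀ a ∈ R, ∀ i < o, ∃ b ∈ R, a ≤ b ∧ i ≤ level b := by
  let bounds : Set Ordinal.{u} :=
    {o | ∃ R ⊆ Q, R.Countable ∧ IsSplitting R ∧ ∀ a ∈ R, level a < o}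
  have bounds_nonempty : bounds.Nonempty := by
    obtain ⟨R, hRQ, hRc, hR⟩ := hQ.exists_countable
    exact ⟨⨆ a : P, Order.succ (level a), R, hRQ, hRc, hR, fun a _ =>
      Order.succ_le_iff.1 (Ordinal.le_iSup (fun a : P => Order.succ (level a)) a)⟩
  obtain ⟨o, ⟨R, hRQ, hRc, hR, hRo⟩, ho⟩ := wellFounded_lt.has_min bounds bounds_nonempty
  refine ⟨R, hRQ, hRc, hR, o, hRo, fun a ha i hi => ?_⟩
  by_contra! hlow
  exact ho i ⟨R ∩ Ici a, inter_subset_left.trans hRQ, hRc.mono inter_subset_left,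
    hR.inter_Ici ha, fun b hb => hlow b hb.1 hb.2⟩ hi

theorem exists_incompRel_level_lt (hQ : IsSplitting Q) {a : P} (ha : a ∈ Q) :
    ∃ s ∈ Q, ∃ t ∈ Q, (a ≤ s ∧ level a < level s) ∧ (a ≤ t ∧ level a < level t) ∧
      IncompRel (· ≤ ·) s t := by
  obtain ⟨s, hs, t, ht, has, hat, hst⟩ := hQ.2 a ha
  exact ⟨s, hs, t, ht,
    ⟨has, level_strictMono (lt_of_le_of_le_of_incompRel has hat hst)⟩,
    ⟨hat, level_strictMono (lt_of_le_of_le_of_incompRel hat has hst.symm)⟩, hst⟩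

theorem exists_not_countable_level [IsTreeOrder P] (hQ : IsSplitting Q)
    (hbdd : ∀ B : ℕ → P, Monotone B → (∀ n, B n ∈ Q) → BddAbove (range B)) :
    ∃ o : Ordinal.{u}, ¬ {t : P | level t = o}.Countable := by
  obtain ⟨R, hRQ, hRc, hR, o, hRo, hcof⟩ := hQ.exists_countable_level_cofinal
  obtain ⟨q, rfl⟩ := hRc.exists_eq_range hR.1
  have climb (n : ℕ) (a : P) (ha : a ∈ range q) : ∃ s ∈ range q, ∃ t ∈ range q,
      (a ≤ s ∧ level (q n) < level s) ∧ (a ≤ t ∧ level (q n) < level t) ∧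
        IncompRel (· ≤ ·) s t := by
    obtain ⟨b, hb, hab, hqb⟩ := hcof a ha _ (hRo (q n) (mem_range_self n))
    obtain ⟨s, hs, t, ht, ⟨hbs, hqs⟩, ⟨hbt, hqt⟩, hst⟩ := hR.exists_incompRel_level_lt hb
    exact ⟨s, hs, t, ht, ⟨hab.trans hbs, hqb.trans_lt hqs⟩, ⟨hab.trans hbt, hqb.trans_lt hqt⟩, hst⟩
  obtain ⟨G, hGR, hG⟩ := exists_binary_scheme hR.1 climb
  have hG_cons (i : Bool) (l : List Bool) :
      G l ≤ G (i :: l) ∧ level (q l.length) < level (G (i :: l)) := by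
    cases i
    exacts [(hG l).2.1, (hG l).1]
  refine ⟨o, not_countable_level_of_scheme (fun l => (hRo _ (hGR l)).le) (fun l => (hG l).2.2)
    fun x => ?_⟩
  obtain ⟨b, hb⟩ := hbdd (fun n => G (PiNat.res x n))
    (monotone_nat_of_le_succ fun n => (hG_cons (x n) (PiNat.res x n)).1)
    fun n => hRQ (hGR _)
  rw [mem_upperBounds, forall_mem_range] at hb
  have level_lt (n : ℕ) : level (q n) < level b := by
    have h := (hG_cons (x n) (PiNat.res x n)).2
    rw [PiNat.res_length] at h
    exact h.trans_le (level_strictMono.monotone (hb (n + 1)))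
  have hob : o ≤ level b := by
    by_contra! hbo
    obtain ⟨_, ⟨n, rfl⟩, -, hn⟩ := hcof (q 0) (mem_range_self 0) _ hbo
    exact (level_lt n).not_ge hn
  exact ⟨b, hob, hb⟩

end IsSplitting

/-- `D` has countable coinitiality: countably many members of `D` suffice to have one below each
member of `D`. -/
def HasCountableCoinitial (D : Set P) : Prop :=
  ∃ S ⊆ D, S.Countable ∧ IsCoinitialFor D S

/-- A slim node: the set of nodes branching off from it has countable coinitiality. In a tree with
countable levels, `SplitsThinChains` applies to all `ω`-chains of slim nodes. -/
def IsSlim (a : P) : Prop :=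
  HasCountableCoinitial {b | IncompRel (· ≤ ·) a b}

/-- The order-theoretic consequence of maximality: every `ω`-chain has two incomparable upper
bounds, as soon as the set of elements not below the chain has countable coinitiality. -/
def SplitsThinChains (P : Type*) [PartialOrder P] : Prop :=
  ∀ B : ℕ → P, Monotone B → HasCountableCoinitial {b | ∀ n, ¬ b ≤ B n} →
    ∃ s ∈ upperBounds (range B), ∃ t ∈ upperBounds (range B), IncompRel (· ≤ ·) s t

theorem isSlim_bot [OrderBot P] : IsSlim (⊥ : P) :=
  ⟨∅, empty_subset _, countable_empty, fun _ hb => absurd bot_le hb.not_le⟩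

section CountableLevels

variable [WellFoundedLT P] [IsTreeOrder P]

theorem IsSlim.of_le_of_forall_le {a d : P}
    (hlev : {t : P | level t = level d}.Countable) (ha : IsSlim a) (had : a ≤ d)
    (hd : ∀ b, a ≤ b → level b < level d → b ≤ d) : IsSlim d := by
  obtain ⟨S, hSa, hS, hcoinit⟩ := ha
  refine ⟨S ∪ {t | level t = level d ∧ t ≠ d}, union_subset ?_ ?_,
    hS.union (hlev.mono fun t ht => ht.1), fun b hb => ?_⟩
  · exact fun e he => incompRel_of_le_left (hSa he) had
  · exact fun t ht => incompRel_of_level_eq ht.1.symm ht.2.symm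
  by_cases hab : IncompRel (· ≤ ·) a b
  · obtain ⟨e, he, heb⟩ := hcoinit hab
    exact ⟨e, Or.inl he, heb⟩
  · have hab : a ≤ b := by
      by_contra hnab
      exact hab ⟨hnab, fun hba => hb.not_ge (hba.trans had)⟩
    have hlevel : level d ≤ level b := by
      by_contra! hlt
      exact hb.not_ge (hd b hab hlt)
    obtain ⟨t, htb, ht⟩ := exists_le_level_eq hlevel
    exact ⟨t, Or.inr ⟨ht, by rintro rfl; exact hb.not_le htb⟩, htb⟩

theorem SplitsThinChains.exists_incompRel_upperBounds (hP : SplitsThinChains P)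
    (hlev : ∀ o : Ordinal.{u}, {t : P | level t = o}.Countable) {B : ℕ → P} (hB : Monotone B)
    (hslim : ∀ n, IsSlim (B n)) :
    ∃ s ∈ upperBounds (range B), ∃ t ∈ upperBounds (range B), IncompRel (· ≤ ·) s t := by
  choose S hSB hS hcoinit using hslim
  let o : Ordinal.{u} := ⨆ n, Order.succ (level (B n))
  have hBo (n : ℕ) : level (B n) < o :=
    Order.succ_le_iff.1 (Ordinal.le_iSup (fun n => Order.succ (level (B n))) n)
  refine hP B hB ⟨(⋃ n, S n) ∪ {t | level t = o}, union_subset ?_ ?_,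
    (countable_iUnion hS).union (hlev o), fun b hb => ?_⟩
  · refine iUnion_subset fun m e he n hen => ?_
    exact (incompRel_of_le_left (hSB m he) (hB (le_max_left m n))).not_ge
      (hen.trans (hB (le_max_right m n)))
  · rintro t ht n htn
    exact (level_strictMono.monotone htn).not_gt (ht ▸ hBo n)
  by_cases hinc : ∃ n, IncompRel (· ≤ ·) (B n) b
  · obtain ⟨n, hn⟩ := hinc
    obtain ⟨e, he, heb⟩ := hcoinit n hn
    exact ⟨e, Or.inl (mem_iUnion.2 ⟨n, he⟩), heb⟩
  · have hBb (n : ℕ) : B n < b := by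
      by_contra hlt
      exact hinc ⟨n, fun h => hlt (h.lt_of_not_ge (hb n)), hb n⟩
    have hob : o ≤ level b :=
      Ordinal.iSup_le fun n => Order.succ_le_of_lt (level_strictMono (hBb n))
    obtain ⟨t, htb, ht⟩ := exists_le_level_eq hob
    exact ⟨t, Or.inr ht, htb⟩

theorem SplitsThinChains.isSplitting_isSlim [OrderBot P] (hP : SplitsThinChains P)
    (hlev : ∀ o : Ordinal.{u}, {t : P | level t = o}.Countable) :
    IsSplitting {a : P | IsSlim a} := by
  refine ⟨⟨⊥, isSlim_bot⟩, fun a ha => ?_⟩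
  let forks : Set P := {s | a ≤ s ∧ ∃ t, a ≤ t ∧ IncompRel (· ≤ ·) s t}
  have forks_nonempty : forks.Nonempty := by
    obtain ⟨s, hs, t, ht, hst⟩ :=
      hP.exists_incompRel_upperBounds hlev (B := fun _ => a) monotone_const fun _ => ha
    exact ⟨s, hs (mem_range_self 0), t, ht (mem_range_self 0), hst⟩
  -- Between `a` and the level of a lowest fork nothing branches off, so slimness is preserved.
  obtain ⟨s, ⟨has, t, hat, hst⟩, hmin⟩ := exists_minimalFor_of_wellFoundedLT
    (· ∈ forks) (level : P → Ordinal.{u}) forks_nonempty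
  have level_le {c d : P} (hac : a ≤ c) (had : a ≤ d) (hcd : IncompRel (· ≤ ·) c d) :
      level s ≤ level c := by
    by_contra! h
    exact h.not_ge (hmin ⟨hac, d, had, hcd⟩ h.le)
  have slim_of_level_eq {d : P} (had : a ≤ d) (hd : level d = level s) : IsSlim d := by
    refine ha.of_le_of_forall_le (hlev _) had fun b hab hbd => ?_
    by_contra hnbd
    have hbd' : IncompRel (· ≤ ·) b d :=
      ⟨hnbd, fun hdb => (level_strictMono.monotone hdb).not_gt hbd⟩
    exact (level_le hab had hbd').not_gt (hd ▸ hbd)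
  obtain ⟨r, hrt, hr⟩ := exists_le_level_eq (level_le hat has hst.symm)
  have har : a ≤ r :=
    (level_le_level_iff hat hrt).1 (hr ▸ level_strictMono.monotone has)
  exact ⟨s, slim_of_level_eq has rfl, r, slim_of_level_eq har hr, has, har,
    incompRel_of_level_eq hr.symm (by rintro rfl; exact hst.not_le hrt)⟩

theorem SplitsThinChains.exists_not_countable_level [OrderBot P] (hP : SplitsThinChains P) :
    ∃ o : Ordinal.{u}, ¬ {t : P | level t = o}.Countable := by
  by_contra! hlev
  obtain ⟨o, ho⟩ := (hP.isSplitting_isSlim hlev).exists_not_countable_level fun B hB hslim =>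
    let ⟨s, hs, _⟩ := hP.exists_incompRel_upperBounds hlev hB hslim
    ⟨s, hs⟩
  exact ho (hlev o)

end CountableLevels

end TreeOrder

namespace AlmostSubset

variable {A B C : Set ℕ}

theorem refl (A : Set ℕ) : AlmostSubset A A := by
  simp [AlmostSubset]

theorem trans (hAB : AlmostSubset A B) (hBC : AlmostSubset B C) : AlmostSubset A C :=
  (hAB.union hBC).subset (sdiff_triangle A B C)

theorem finite_of_disjoint {X Y : Set ℕ} (hX : AlmostSubset A X) (hY : AlmostSubset A Y)
    (hXY : Disjoint X Y) : A.Finite := by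
  refine (hX.union hY).subset ?_
  rw [← sdiff_inter, hXY.inter_eq, sdiff_empty]

end AlmostSubset

theorem infinite_of_not_almostSubset {A B : Set ℕ} (h : ¬ AlmostSubset A B) : A.Infinite :=
  fun hA => h (hA.subset sdiff_subset)

theorem infinite_iInter_le_diff {B : ℕ → Set ℕ} (hB : ∀ m n, m ≤ n → AlmostSubset (B n) (B m))
    {E : Set ℕ} {n : ℕ} (hE : ¬ AlmostSubset (B n) E) : ((⋂ m ≤ n, B m) \ E).Infinite := by
  intro hfin
  have hdiff : (⋃ m ∈ Iic n, B n \ B m).Finite :=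
    (finite_Iic n).biUnion fun m hm => hB m n hm
  refine hE ((hfin.union hdiff).subset fun x hx => ?_)
  by_cases h : ∀ m ≤ n, x ∈ B m
  · exact Or.inl ⟨mem_iInter₂.2 h, hx.2⟩
  · push Not at h
    obtain ⟨m, hm, hxm⟩ := h
    exact Or.inr (mem_biUnion (mem_Iic.2 hm) ⟨hx.1, hxm⟩)

theorem exists_disjoint_pseudointersections {ι : Type*} [Countable ι] [Nonempty ι]
    {B : ℕ → Set ℕ} (hB : ∀ m n, m ≤ n → AlmostSubset (B n) (B m)) {E : ι → Set ℕ}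
    (hE : ∀ n k, ¬ AlmostSubset (B n) (E k)) :
    ∃ X : Bool → Set ℕ, Disjoint (X true) (X false) ∧ (∀ i n, AlmostSubset (X i) (B n)) ∧
      ∀ i k, ¬ AlmostSubset (X i) (E k) := by
  obtain ⟨u, hu⟩ := exists_surjective_nat (Bool × ι × ℕ)
  -- `x n ∉ E k` for `k = (u n).2.1`, and each pair `(i, k)` is listed by `u` infinitely often.
  obtain ⟨x, hx, hxBE⟩ := Filter.extraction_forall_of_frequently fun n =>
    Nat.frequently_atTop_iff_infinite.2 (infinite_iInter_le_diff hB (hE n (u n).2.1))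
  refine ⟨fun i => x '' {n | (u n).1 = i}, ?_, fun i n => ?_, fun i k => ?_⟩
  · rw [disjoint_image_iff hx.injective, disjoint_left]
    rintro n (ht : _ = true) (hf : _ = false)
    simp [ht] at hf
  · refine ((finite_Iio n).image x).subset ?_
    rintro _ ⟨⟨m, -, rfl⟩, hm⟩
    refine mem_image_of_mem x (mem_Iio.2 ?_)
    by_contra! hnm
    exact hm (mem_iInter₂.1 (hxBE m).1 n hnm)
  · have hcode : {n | (u n).1 = i ∧ (u n).2.1 = k}.Infinite := by
      refine Infinite.of_image (fun n => (u n).2.2) (infinite_univ.mono fun j _ => ?_)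
      obtain ⟨n, hn⟩ := hu (i, k, j)
      exact ⟨n, by simp [hn]⟩
    refine (hcode.image hx.injective.injOn).mono ?_
    rintro _ ⟨n, ⟨hi, rfl⟩, rfl⟩
    exact ⟨mem_image_of_mem x hi, (hxBE n).2⟩

namespace IsStarTree

variable {T : Set (Set ℕ)}

/-- The nodes of the tree `T`, ordered by reverse almost inclusion so that the root is at the
bottom. This is not the subtype of `T`, which already carries the order `⊆`. -/
@[ext]
structure Node (hT : IsStarTree T) where
  val : Set ℕ
  mem : val ∈ T

namespace Node

variable {hT : IsStarTree T}

instance : PartialOrder hT.Node where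
  le s t := AlmostSubset t.val s.val
  le_refl s := .refl s.val
  le_trans _ _ _ hst htu := htu.trans hst
  le_antisymm s t hst hts := Node.ext (hT.2.2.1 _ s.mem _ t.mem hts hst)

instance : OrderBot hT.Node where
  bot := ⟨univ, hT.2.1⟩
  bot_le s := show (s.val \ univ).Finite by simp

theorem exists_isLeast_of_subset_Iic {t : hT.Node} {S : Set hT.Node} (hS : S ⊆ Iic t)
    (hne : S.Nonempty) : ∃ m, IsLeast S m := by
  obtain ⟨_, ⟨m, hm, rfl⟩, hmin⟩ := hT.2.2.2 t.val t.mem (Node.val '' S)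
    (image_subset_iff.2 fun s hs => ⟨s.mem, hS hs⟩) (hne.image _)
  exact ⟨m, hm, fun s hs => hmin s.val (mem_image_of_mem _ hs)⟩

instance : WellFoundedLT hT.Node := by
  refine ⟨WellFounded.wellFounded_iff_has_min.2 fun S ⟨t, ht⟩ => ?_⟩
  obtain ⟨m, ⟨hmS, hmt⟩, hmin⟩ :=
    exists_isLeast_of_subset_Iic (inter_subset_right : S ∩ Iic t ⊆ Iic t) ⟨t, ht, mem_Iic.2 le_rfl⟩
  exact ⟨m, hmS, fun s hs hsm => hsm.not_ge (hmin ⟨hs, hsm.le.trans hmt⟩)⟩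

instance : IsTreeOrder hT.Node where
  isChain_Iic c a ha b hb _ := by
    obtain ⟨m, hm, hmin⟩ := exists_isLeast_of_subset_Iic (pair_subset ha hb) (insert_nonempty _ _)
    rcases hm with rfl | rfl
    · exact Or.inl (hmin (mem_insert_of_mem _ rfl))
    · exact Or.inr (hmin (mem_insert _ _))

theorem not_le_of_disjoint {s t : hT.Node} {X Y : Set ℕ} (hXY : Disjoint X Y)
    (hs : AlmostSubset s.val X) (ht : AlmostSubset t.val Y) : ¬ s ≤ t := fun hst =>
  hT.1 t.val t.mem (AlmostSubset.finite_of_disjoint (AlmostSubset.trans hst hs) ht hXY)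

/-- `StarPred` is ordered by `⊆*`, which is the reverse of the tree order. -/
def starPredIso (s : hT.Node) :
    (fun a b : StarPred T s.val => AlmostSubset a.1 b.1) ≃r (fun a b : Iic s => b ≤ a) where
  toFun a := ⟨⟨a.1, a.2.1⟩, a.2.2⟩
  invFun a := ⟨a.1.val, a.1.mem, a.2⟩
  map_rel_iff' := Iff.rfl

theorem sameLevel_of_level_eq {s t : hT.Node} (h : level s = level t) :
    SameLevel T s.val t.val := by
  have e : Iic s ≃o Iic t :=
    (iicIsoLevel s).trans ((OrderIso.setCongr _ _ (congrArg Iic h)).trans (iicIsoLevel t).symm)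
  exact ⟨(starPredIso s).trans (e.swap.trans (starPredIso t).symm)⟩

theorem countable_level (hlev : CountableLevels T) (o : Ordinal) :
    {t : hT.Node | level t = o}.Countable := by
  rcases eq_empty_or_nonempty {t : hT.Node | level t = o} with h | ⟨t, rfl⟩
  · rw [h]
    exact countable_empty
  · have hmaps : MapsTo Node.val {s : hT.Node | level s = level t} {A ∈ T | SameLevel T A t.val} :=
      fun s hs => ⟨s.mem, sameLevel_of_level_eq hs⟩
    exact hmaps.countable_of_injOn (fun _ _ _ _ => Node.ext) (hlev t.val t.mem)

theorem exists_almostSubset (hmax : IsMaxStarTree T) {B : ℕ → hT.Node} (hB : Monotone B)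
    {X : Set ℕ} (hX : X.Infinite) (hXB : ∀ t : hT.Node, AlmostSubset X t.val → ∃ n, t ≤ B n) :
    ∃ F : hT.Node, AlmostSubset F.val X := by
  rcases hmax.2 X hX with ⟨F, hF, hFX⟩ | ⟨C, hC, C', hC', hinc, hXC, hXC'⟩
  · exact ⟨⟨F, hF⟩, hFX⟩
  · obtain ⟨m, hm⟩ := hXB ⟨C, hC⟩ hXC
    obtain ⟨n, hn⟩ := hXB ⟨C', hC'⟩ hXC'
    exact ((le_or_ge_of_le_of_le (hm.trans (hB (le_max_left m n)))
      (hn.trans (hB (le_max_right m n)))).elim hinc.2 hinc.1).elim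

theorem splitsThinChains (hmax : IsMaxStarTree T) : SplitsThinChains hT.Node := by
  rintro B hB ⟨S, hSB, hS, hcoinit⟩
  have : Countable S := hS
  -- The extra set `∅` makes the index type nonempty even when `S` is empty.
  let E : Option S → Set ℕ := fun e => e.elim ∅ fun s => s.1.val
  have hE (n : ℕ) : ∀ k, ¬ AlmostSubset (B n).val (E k)
    | none => fun h => hT.1 _ (B n).mem (by simpa [AlmostSubset, E] using h)
    | some s => hSB s.2 n
  obtain ⟨X, hdisj, hXB, hXE⟩ := exists_disjoint_pseudointersections (fun _ _ h => hB h) hE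
  have hbelow (i : Bool) (t : hT.Node) (hXt : AlmostSubset (X i) t.val) : ∃ n, t ≤ B n := by
    by_contra! ht
    obtain ⟨s, hs, hst⟩ := hcoinit ht
    exact hXE i (some ⟨s, hs⟩) (hXt.trans hst)
  choose F hF using fun i =>
    exists_almostSubset hmax hB (infinite_of_not_almostSubset (hXE i none)) (hbelow i)
  have hFB (i : Bool) : F i ∈ upperBounds (range B) :=
    forall_mem_range.2 fun n => (hF i).trans (hXB i n)
  exact ⟨F true, hFB true, F false, hFB false, not_le_of_disjoint hdisj (hF true) (hF false),
    not_le_of_disjoint hdisj.symm (hF false) (hF true)⟩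

end Node

end IsStarTree

theorem not_max_of_few_branching_general {T : Set (Set ℕ)} (hlev : CountableLevels T) :
    ¬ IsMaxStarTree T := fun hmax =>
  have hT : IsStarTree T := hmax.1
  let ⟨o, ho⟩ := (IsStarTree.Node.splitsThinChains (hT := hT) hmax).exists_not_countable_level
  ho (IsStarTree.Node.countable_level hlev o)

/-- If `T` is a subtree of `([ω]^ω, ⊆*)` with countable levels and
`b = {A_α : α < γ}` is a maximal branch of `T` with `cf(γ) > ω` such that only
countably many nodes of `b` are branching nodes of `T`, then `T` is not maximal. -/
theorem not_max_of_few_branching (T : Set (Set ℕ)) (hT : IsStarTree T)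
    (hlev : CountableLevels T)
    (γ : Ordinal) (hcf : Cardinal.aleph0 < γ.cof)
    (A : Ordinal → Set ℕ) (hmem : ∀ α < γ, A α ∈ T)
    (hdec : ∀ α β : Ordinal, α < β → β < γ →
      AlmostSubset (A β) (A α) ∧ ¬ AlmostSubset (A α) (A β))
    (b : Set (Set ℕ)) (hb : b = {x | ∃ α < γ, x = A α})
    (hchain : IsChain (fun x y => AlmostSubset x y) b)
    (hmaxbr : ∀ b', b ⊆ b' → b' ⊆ T →
      IsChain (fun x y => AlmostSubset x y) b' → b' = b)
    (hbr : {x ∈ b | IsBranchingNode T x}.Countable) :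
    ¬ IsMaxStarTree T :=
  not_max_of_few_branching_general hlev
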